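/- arXiv:1205.0343 — 2 statements merged into one kernel-verified Lean document; each statement's English description precedes it below -/
import Mathlib

section
/- Let n_1 and n_2 be odd integers with min{n_1, n_2} ≥ 5. Then the signed domination number of the complete bipartite graph K_{n_1,n_2} equals 6. -/
open scoped Classical

/-- The signed domination number of a finite simple graph `G`: the minimum weight of a
function `f : V → {−1, 1}` such that `f(N[v]) ≥ 1` for every vertex `v`. -/
noncomputable def signedDomNum {V : Type*} [Fintype V] (G : SimpleGraph V) : ℤ :=
  sInf {w : ℤ | ∃ f : V → ℤ, (∀ v, f v = 1 ∨ f v = -1) ∧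
    (∀ v, 1 ≤ f v + ∑ u ∈ G.neighborFinset v, f u) ∧ w = ∑ v, f v}

/-!
A side of a complete bipartite graph enters the domination condition only through its sum, and
that sum has the parity of its number of vertices. If a side contains a `-1`, the opposite side
must sum to at least `2`; otherwise it sums to its full cardinality, and the opposite side still
has a nonnegative sum. Once both sides have at least four vertices, the cheapest choice is the
smallest sum `≥ 2` of the right parity on each side.
-/

theorem nonneg_of_forall_one_le_add {ι : Type*} [Nonempty ι] {g : ι → ℤ}
    (hg : ∀ i, g i = 1 ∨ g i = -1) {s : ℤ} (hs : ∀ i, 1 ≤ g i + s) : 0 ≤ s := by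
  obtain ⟨i⟩ := ‹Nonempty ι›
  have := hs i
  rcases hg i with h | h <;> omega

section SignFunction

variable {ι : Type*} [Fintype ι]

theorem sum_modEq_card_of_forall_eq_one_or_neg_one {g : ι → ℤ} (hg : ∀ i, g i = 1 ∨ g i = -1) :
    ∑ i, g i ≡ Fintype.card ι [ZMOD 2] := by
  have modEq_one (i : ι) : g i ≡ 1 [ZMOD 2] := by
    rcases hg i with h | h
    · rw [h]
    · rw [h]; rfl
  simpa using Int.ModEq.sum fun i (_ : i ∈ Finset.univ) => modEq_one i

theorem exists_sum_eq_card_sub_two_mul {k : ℕ} (hk : k ≤ Fintype.card ι) :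
    ∃ g : ι → ℤ, (∀ i, g i = 1 ∨ g i = -1) ∧ ∑ i, g i = Fintype.card ι - 2 * k := by
  obtain ⟨s, -, hs⟩ := Finset.exists_subset_card_eq (s := (Finset.univ : Finset ι)) hk
  refine ⟨fun i => 1 - 2 * if i ∈ s then 1 else 0, fun i => ?_, ?_⟩
  · by_cases hi : i ∈ s <;> simp [hi]
  · simp [hs, mul_comm]

theorem exists_sum_eq_two_add_card_emod_two (hι : 2 ≤ Fintype.card ι) :
    ∃ g : ι → ℤ, (∀ i, g i = 1 ∨ g i = -1) ∧ ∑ i, g i = 2 + (Fintype.card ι : ℤ) % 2 := by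
  obtain ⟨g, hg, hsum⟩ := exists_sum_eq_card_sub_two_mul (ι := ι)
    (k := Fintype.card ι / 2 - 1) (by omega)
  exact ⟨g, hg, by omega⟩

theorem two_le_or_sum_eq_card_of_forall_one_le_add {g : ι → ℤ}
    (hg : ∀ i, g i = 1 ∨ g i = -1) {s : ℤ} (hs : ∀ i, 1 ≤ g i + s) :
    2 ≤ s ∨ ∑ i, g i = Fintype.card ι := by
  by_cases hneg : ∃ i, g i = -1
  · obtain ⟨i, hi⟩ := hneg
    have := hs i
    exact Or.inl (by omega)
  · have eq_one (i : ι) : g i = 1 := (hg i).resolve_right fun hi => hneg ⟨i, hi⟩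
    simp [eq_one]

end SignFunction

/-- `f` is a signed dominating function of `G`: it takes the values `±1`, and its sum over every
closed neighbourhood is positive. It is integer-valued, as in `signedDomNum`. -/
def IsSignedDominating {V : Type*} [Fintype V] (G : SimpleGraph V) (f : V → ℤ) : Prop :=
  (∀ v, f v = 1 ∨ f v = -1) ∧ ∀ v, 1 ≤ f v + ∑ u ∈ G.neighborFinset v, f u

theorem IsSignedDominating.signedDomNum_eq {V : Type*} [Fintype V] {G : SimpleGraph V}
    {f : V → ℤ} (hf : IsSignedDominating G f)
    (hmin : ∀ g, IsSignedDominating G g → ∑ v, f v ≤ ∑ v, g v) :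
    signedDomNum G = ∑ v, f v := by
  refine IsLeast.csInf_eq ⟨⟨f, hf.1, hf.2, rfl⟩, ?_⟩
  rintro _ ⟨g, hsign, hdom, rfl⟩
  exact hmin g ⟨hsign, hdom⟩

theorem neighborFinset_completeBipartiteGraph_inl {α β : Type*} [Fintype β] (a : α)
    [Fintype ((completeBipartiteGraph α β).neighborSet (Sum.inl a))] :
    (completeBipartiteGraph α β).neighborFinset (Sum.inl a) =
      Finset.univ.map Function.Embedding.inr := by
  ext (x | x) <;> simp

theorem neighborFinset_completeBipartiteGraph_inr {α β : Type*} [Fintype α] (b : β)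
    [Fintype ((completeBipartiteGraph α β).neighborSet (Sum.inr b))] :
    (completeBipartiteGraph α β).neighborFinset (Sum.inr b) =
      Finset.univ.map Function.Embedding.inl := by
  ext (x | x) <;> simp

section CompleteBipartite

variable {α β : Type*} [Fintype α] [Fintype β]

theorem isSignedDominating_completeBipartiteGraph_iff {f : α ⊕ β → ℤ} :
    IsSignedDominating (completeBipartiteGraph α β) f ↔
      ((∀ a, f (Sum.inl a) = 1 ∨ f (Sum.inl a) = -1) ∧
        ∀ b, f (Sum.inr b) = 1 ∨ f (Sum.inr b) = -1) ∧
      (∀ a, 1 ≤ f (Sum.inl a) + ∑ b, f (Sum.inr b)) ∧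
        ∀ b, 1 ≤ f (Sum.inr b) + ∑ a, f (Sum.inl a) := by
  simp only [IsSignedDominating, Sum.forall, neighborFinset_completeBipartiteGraph_inl,
    neighborFinset_completeBipartiteGraph_inr, Finset.sum_map, Function.Embedding.inl_apply,
    Function.Embedding.inr_apply]

theorem exists_isSignedDominating_completeBipartiteGraph (hα : 2 ≤ Fintype.card α)
    (hβ : 2 ≤ Fintype.card β) :
    ∃ f, IsSignedDominating (completeBipartiteGraph α β) f ∧
      ∑ v, f v = 4 + (Fintype.card α : ℤ) % 2 + (Fintype.card β : ℤ) % 2 := by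
  obtain ⟨g, hg, hgsum⟩ := exists_sum_eq_two_add_card_emod_two hα
  obtain ⟨h, hh, hhsum⟩ := exists_sum_eq_two_add_card_emod_two hβ
  refine ⟨Sum.elim g h, isSignedDominating_completeBipartiteGraph_iff.mpr
    ⟨⟨hg, hh⟩, fun a => ?_, fun b => ?_⟩, ?_⟩
  · simp only [Sum.elim_inl, Sum.elim_inr]
    rcases hg a with ha | ha <;> omega
  · simp only [Sum.elim_inl, Sum.elim_inr]
    rcases hh b with hb | hb <;> omega
  · simp only [Fintype.sum_sum_type, Sum.elim_inl, Sum.elim_inr]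
    omega

theorem IsSignedDominating.le_sum_of_completeBipartiteGraph {f : α ⊕ β → ℤ}
    (hf : IsSignedDominating (completeBipartiteGraph α β) f)
    (hα : 4 ≤ Fintype.card α) (hβ : 4 ≤ Fintype.card β) :
    4 + (Fintype.card α : ℤ) % 2 + (Fintype.card β : ℤ) % 2 ≤ ∑ v, f v := by
  obtain ⟨⟨hsignα, hsignβ⟩, hdomα, hdomβ⟩ := isSignedDominating_completeBipartiteGraph_iff.mp hf
  have : Nonempty α := Fintype.card_pos_iff.mp (by omega)
  have : Nonempty β := Fintype.card_pos_iff.mp (by omega)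
  have parityα := (sum_modEq_card_of_forall_eq_one_or_neg_one hsignα).eq
  have parityβ := (sum_modEq_card_of_forall_eq_one_or_neg_one hsignβ).eq
  have sumα_nonneg : 0 ≤ ∑ a, f (Sum.inl a) := nonneg_of_forall_one_le_add hsignβ hdomβ
  have sumβ_nonneg : 0 ≤ ∑ b, f (Sum.inr b) := nonneg_of_forall_one_le_add hsignα hdomα
  rw [Fintype.sum_sum_type]
  rcases two_le_or_sum_eq_card_of_forall_one_le_add hsignα hdomα with two_le_sumβ | sumα_eq <;>
    rcases two_le_or_sum_eq_card_of_forall_one_le_add hsignβ hdomβ with two_le_sumα | sumβ_eq <;>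
    omega

theorem signedDomNum_completeBipartite_min_ge_five_general
    (hα : 4 ≤ Fintype.card α) (hβ : 4 ≤ Fintype.card β) :
    signedDomNum (completeBipartiteGraph α β) =
      4 + (Fintype.card α : ℤ) % 2 + (Fintype.card β : ℤ) % 2 := by
  obtain ⟨f, hf, hsum⟩ := exists_isSignedDominating_completeBipartiteGraph
    (α := α) (β := β) (by omega) (by omega)
  rw [← hsum]
  exact hf.signedDomNum_eq fun g hg => hsum ▸ hg.le_sum_of_completeBipartiteGraph hα hβ

end CompleteBipartite

theorem signedDomNum_completeBipartite_min_ge_five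
    (n₁ n₂ : ℕ) (h₁ : Odd n₁) (h₂ : Odd n₂) (hmin : 5 ≤ min n₁ n₂) :
    signedDomNum (completeBipartiteGraph (Fin n₁) (Fin n₂)) = 6 := by
  rw [signedDomNum_completeBipartite_min_ge_five_general] <;> grind [Fintype.card_fin]
end

section
/- Let k ≥ 2 and let n_1, …, n_k be even positive integers with n_i ≠ 2 for all i (i.e., n_i ≥ 4 for all i). Then the signed domination number of the complete k-partite graph K_{n_1,…,n_k} equals 4. -/
open scoped Classical

/-!
Let `f` be a signed dominating function of weight `w`, and let `pᵢ` be the weight of the part `Vᵢ`.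
Domination at a vertex `v` of `Vᵢ` says `pᵢ < f v + w`: hence `pᵢ ≤ w`, and `pᵢ ≤ w - 2` as soon as
`f` takes the value `-1` on `Vᵢ`. If `w ≤ 2`, then no part of size at least `3` is constantly `1`,
so every `pᵢ` is at most `w - 2 ≤ 0`, and summing over the parts gives `w ≤ w - 2`, a contradiction.
So `w ≥ 3`, and `w ≥ 4` because `w` has the parity of the number of vertices.

Conversely, any part weights with `|pᵢ| ≤ |Vᵢ|`, `pᵢ ≡ |Vᵢ| (mod 2)` and `pᵢ ≤ (∑ pⱼ) - 2` come from
a signed dominating function; weight `2` on two parts and `0` on the others gives total weight `4`.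
-/

section SignedDominating

variable {V : Type*} [Fintype V]

/-- Signed dominating functions of `G`, as integer-valued functions with values in `{1, -1}`. The
closed neighborhood sum `f(N[v])` is written as in `signedDomNum`. -/
structure IsSignedDominating_s11 (G : SimpleGraph V) (f : V → ℤ) : Prop where
  eq_one_or_neg_one (v : V) : f v = 1 ∨ f v = -1
  one_le_sum (v : V) : 1 ≤ f v + ∑ u ∈ G.neighborFinset v, f u

variable {G : SimpleGraph V} {f : V → ℤ}

lemma signedDomNum_eq_sum_of_forall_le (hf : IsSignedDominating_s11 G f)
    (hmin : ∀ g, IsSignedDominating_s11 G g → ∑ v, f v ≤ ∑ v, g v) :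
    signedDomNum G = ∑ v, f v := by
  refine IsLeast.csInf_eq ⟨⟨f, hf.eq_one_or_neg_one, hf.one_le_sum, rfl⟩, ?_⟩
  rintro _ ⟨g, hg, hdom, rfl⟩
  exact hmin g ⟨hg, hdom⟩

lemma even_sum_iff_even_card_of_forall_odd {α : Type*} (s : Finset α) {f : α → ℤ}
    (hf : ∀ a ∈ s, Odd (f a)) : Even (∑ a ∈ s, f a) ↔ Even s.card := by
  have hsub : Even (∑ a ∈ s, (f a - 1)) := Finset.even_sum _ fun a ha => (hf a ha).sub_odd odd_one
  rw [Finset.sum_sub_distrib, Int.even_sub] at hsub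
  simpa using hsub

lemma IsSignedDominating_s11.even_sum_iff (hf : IsSignedDominating_s11 G f) :
    Even (∑ v, f v) ↔ Even (Fintype.card V) :=
  even_sum_iff_even_card_of_forall_odd _ fun v _ => by
    rcases hf.eq_one_or_neg_one v with h | h <;> simp [h]

end SignedDominating

lemma exists_eq_one_or_neg_one_and_sum_eq {α : Type*} [Fintype α] {p : ℤ}
    (hp : |p| ≤ Fintype.card α) (hpar : Even (p + Fintype.card α)) :
    ∃ f : α → ℤ, (∀ a, f a = 1 ∨ f a = -1) ∧ ∑ a, f a = p := by
  obtain ⟨hlo, hhi⟩ := abs_le.1 hp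
  obtain ⟨m, hm⟩ := hpar
  lift m to ℕ using by omega
  obtain ⟨s, -, hs⟩ : ∃ s ⊆ (Finset.univ : Finset α), s.card = m :=
    Finset.exists_subset_card_eq (by rw [Finset.card_univ]; omega)
  refine ⟨fun a => 2 * (if a ∈ s then 1 else 0) - 1, fun a => ?_, ?_⟩
  · by_cases h : a ∈ s <;> simp [h]
  · rw [Finset.sum_sub_distrib, ← Finset.mul_sum, Finset.sum_boole]
    simp only [Finset.filter_univ_mem, hs, Finset.sum_const, Finset.card_univ, nsmul_eq_mul,
      mul_one]
    omega

section CompleteMultipartite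

open SimpleGraph (completeMultipartiteGraph)

variable {ι : Type*} [Fintype ι] {V : ι → Type*} [∀ i, Fintype (V i)]

lemma sum_neighborFinset_completeMultipartiteGraph {M : Type*} [AddCommGroup M]
    (f : (Σ i, V i) → M) (v : Σ i, V i)
    [Fintype ((completeMultipartiteGraph V).neighborSet v)] :
    ∑ u ∈ (completeMultipartiteGraph V).neighborFinset v, f u = ∑ u, f u - ∑ j, f ⟨v.1, j⟩ := by
  have hN : (completeMultipartiteGraph V).neighborFinset v =
      (Finset.univ.erase v.1).sigma fun _ => Finset.univ := by
    ext u
    simp [eq_comm]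
  rw [hN, Finset.sum_sigma, Finset.sum_erase_eq_sub (Finset.mem_univ v.1), Fintype.sum_sigma]

lemma isSignedDominating_completeMultipartiteGraph_iff {f : (Σ i, V i) → ℤ} :
    IsSignedDominating_s11 (completeMultipartiteGraph V) f ↔
      (∀ v, f v = 1 ∨ f v = -1) ∧ ∀ i j, ∑ j', f ⟨i, j'⟩ < f ⟨i, j⟩ + ∑ v, f v := by
  refine ⟨fun h => ⟨h.eq_one_or_neg_one, fun i j => ?_⟩, fun h => ⟨h.1, fun ⟨i, j⟩ => ?_⟩⟩
  · have := h.one_le_sum ⟨i, j⟩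
    rw [sum_neighborFinset_completeMultipartiteGraph] at this
    dsimp only at this
    omega
  · have := h.2 i j
    rw [sum_neighborFinset_completeMultipartiteGraph]
    dsimp only
    omega

lemma IsSignedDominating_s11.three_le_sum [Nonempty ι] {f : (Σ i, V i) → ℤ}
    (hf : IsSignedDominating_s11 (completeMultipartiteGraph V) f)
    (hV : ∀ i, 3 ≤ Fintype.card (V i)) : 3 ≤ ∑ v, f v := by
  obtain ⟨hval, hdom⟩ := isSignedDominating_completeMultipartiteGraph_iff.1 hf
  by_contra! hlt
  have exists_neg (i : ι) : ∃ j, f ⟨i, j⟩ = -1 := by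
    by_contra! hne
    have hone (j : V i) : f ⟨i, j⟩ = 1 := (hval _).resolve_right (hne j)
    obtain ⟨j⟩ : Nonempty (V i) := Fintype.card_pos_iff.1 (by linarith [hV i])
    have hij := hdom i j
    simp only [hone, Finset.sum_const, Finset.card_univ, nsmul_eq_mul, mul_one] at hij
    have := hV i
    omega
  have part_le (i : ι) : ∑ j, f ⟨i, j⟩ ≤ ∑ v, f v - 2 := by
    obtain ⟨j, hj⟩ := exists_neg i
    have := hdom i j
    omega
  have one_le_card : (1 : ℤ) ≤ Fintype.card ι := by exact_mod_cast Fintype.card_pos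
  have : ∑ v, f v ≤ ∑ v, f v - 2 :=
    calc ∑ v, f v = ∑ i, ∑ j, f ⟨i, j⟩ := Fintype.sum_sigma f
      _ ≤ Fintype.card ι • (∑ v, f v - 2) :=
        Finset.sum_le_card_nsmul _ _ _ fun i _ => part_le i
      _ = Fintype.card ι * (∑ v, f v - 2) := nsmul_eq_mul _ _
      _ ≤ 1 * (∑ v, f v - 2) := mul_le_mul_of_nonpos_right one_le_card (by omega)
      _ = ∑ v, f v - 2 := one_mul _
  omega

lemma IsSignedDominating_s11.four_le_sum [Nonempty ι] {f : (Σ i, V i) → ℤ}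
    (hf : IsSignedDominating_s11 (completeMultipartiteGraph V) f)
    (hV : ∀ i, 3 ≤ Fintype.card (V i)) (heven : Even (∑ i, Fintype.card (V i))) :
    4 ≤ ∑ v, f v := by
  obtain ⟨m, hm⟩ := hf.even_sum_iff.2 (by rwa [Fintype.card_sigma])
  have := hf.three_le_sum hV
  omega

lemma exists_isSignedDominating_completeMultipartiteGraph {p : ι → ℤ}
    (hcard : ∀ i, |p i| ≤ Fintype.card (V i)) (hpar : ∀ i, Even (p i + Fintype.card (V i)))
    (hdom : ∀ i, p i + 2 ≤ ∑ j, p j) :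
    ∃ f, IsSignedDominating_s11 (completeMultipartiteGraph V) f ∧ ∑ v, f v = ∑ i, p i := by
  choose f hval hsum using fun i => exists_eq_one_or_neg_one_and_sum_eq (hcard i) (hpar i)
  have htotal : ∑ v : Σ i, V i, f v.1 v.2 = ∑ i, p i := by
    rw [Fintype.sum_sigma]
    exact Fintype.sum_congr _ _ hsum
  refine ⟨fun v => f v.1 v.2, isSignedDominating_completeMultipartiteGraph_iff.2
    ⟨fun v => hval v.1 v.2, fun i j => ?_⟩, htotal⟩
  have := hdom i
  simp only [htotal, hsum]
  rcases hval i j with h | h <;> omega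

lemma exists_isSignedDominating_sum_eq_four [Nontrivial ι]
    (heven : ∀ i, Even (Fintype.card (V i))) (hV : ∀ i, 2 ≤ Fintype.card (V i)) :
    ∃ f, IsSignedDominating_s11 (completeMultipartiteGraph V) f ∧ ∑ v, f v = 4 := by
  obtain ⟨a, b, hab⟩ := exists_pair_ne ι
  let p : ι → ℤ := fun i => if i ∈ ({a, b} : Finset ι) then 2 else 0
  have hp (i : ι) : p i = 2 ∨ p i = 0 := by
    simp only [p]
    split_ifs <;> simp
  have hsum : ∑ i, p i = 4 := by
    simp only [p, Finset.sum_ite_mem, Finset.univ_inter, Finset.sum_const, Finset.card_pair hab]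
    norm_num
  rw [← hsum]
  refine exists_isSignedDominating_completeMultipartiteGraph (fun i => ?_) (fun i => ?_) fun i => ?_
  · rcases hp i with h | h <;> simp [h, hV i]
  · rcases hp i with h | h <;> simpa [h, Int.even_add] using heven i
  · rcases hp i with h | h <;> omega

theorem signedDomNum_eq_four_all_even_general [Nontrivial ι]
    (heven : ∀ i, Even (Fintype.card (V i))) (hV : ∀ i, 3 ≤ Fintype.card (V i)) :
    signedDomNum (completeMultipartiteGraph V) = 4 := by
  obtain ⟨f, hf, hsum⟩ :=
    exists_isSignedDominating_sum_eq_four heven fun i => (Nat.le_succ 2).trans (hV i)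
  rw [← hsum]
  refine signedDomNum_eq_sum_of_forall_le hf fun g hg => ?_
  rw [hsum]
  exact hg.four_le_sum hV (Finset.even_sum _ fun i _ => heven i)

end CompleteMultipartite

theorem signedDomNum_eq_four_all_even
    (k : ℕ) (hk : 2 ≤ k) (n : Fin k → ℕ)
    (hn : ∀ i, Even (n i) ∧ 0 < n i ∧ n i ≠ 2) :
    signedDomNum (SimpleGraph.completeMultipartiteGraph fun i : Fin k => Fin (n i)) = 4 := by
  have : Nontrivial (Fin k) := Fin.nontrivial_iff_two_le.2 hk
  exact signedDomNum_eq_four_all_even_general (by simpa using fun i => (hn i).1) fun i => by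
    obtain ⟨⟨m, hm⟩, hpos, hne⟩ := hn i
    rw [Fintype.card_fin]
    omega
end
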